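/- arXiv:2007.02110 — 4 statements merged into one kernel-verified Lean document; each statement's English description precedes it below -/
import Mathlib

section
/- Let n ≥ 1, ℏ > 0, let V, S : ℝⁿ → ℝ, let D ⊆ ℝ × ℝⁿ be open, and let U : D → ℝ be C². Define η := exp(−U/ℏ). Then for every (t,x) ∈ D: max{−∂_t U(t,x) + (1/2)|∇_x U(t,x)|² − (ℏ/2) Δ_x U(t,x) − V(x), U(t,x) − S(x)} = 0 if and only if min{−ℏ ∂_t η(t,x) − (ℏ²/2) Δ_x η(t,x) + V(x) η(t,x), η(t,x) − e^{−S(x)/ℏ}} = 0. -/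
/-!
Write `A` for the Hamilton–Jacobi–Bellman expression in `U`. The chain rule gives
`∂_t η = -(∂_t U / ℏ) η` and `Δ_x η = (|∇_x U|² / ℏ² - Δ_x U / ℏ) η`, so the linear expression in
`η` equals `-η A`: the quadratic gradient term cancels against the one produced by `Δ_x η`.
Since `η > 0` and `s ↦ exp (-s / ℏ)` is strictly decreasing, both entries of the `min` have the
opposite signs of the corresponding entries of the `max`, and vanish at the same time; this is all
that the vanishing of `max` and `min` depends on.
-/

/-- Time partial derivative of `ψ : ℝ × ℝⁿ → ℝ` at `p = (t,x)`. -/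
noncomputable def pT {n : ℕ} (ψ : ℝ × EuclideanSpace ℝ (Fin n) → ℝ)
    (p : ℝ × EuclideanSpace ℝ (Fin n)) : ℝ :=
  deriv (fun s => ψ (s, p.2)) p.1

/-- Spatial gradient of `ψ : ℝ × ℝⁿ → ℝ` at `p = (t,x)`. -/
noncomputable def gX {n : ℕ} (ψ : ℝ × EuclideanSpace ℝ (Fin n) → ℝ)
    (p : ℝ × EuclideanSpace ℝ (Fin n)) : EuclideanSpace ℝ (Fin n) :=
  gradient (fun y => ψ (p.1, y)) p.2

/-- Spatial Laplacian of `ψ : ℝ × ℝⁿ → ℝ` at `p = (t,x)`. -/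
noncomputable def lapX {n : ℕ} (ψ : ℝ × EuclideanSpace ℝ (Fin n) → ℝ)
    (p : ℝ × EuclideanSpace ℝ (Fin n)) : ℝ :=
  ∑ i, fderiv ℝ (fun y => fderiv ℝ (fun y' => ψ (p.1, y')) y (EuclideanSpace.single i 1))
    p.2 (EuclideanSpace.single i 1)

/-- The vanishing of a maximum of two reals depends only on their signs, and reversing both signs
turns it into the vanishing of a minimum. -/
lemma max_eq_zero_iff_min_eq_zero_of_sign {a b a' b' : ℝ}
    (ha : a ≤ 0 ↔ 0 ≤ a') (ha' : 0 ≤ a ↔ a' ≤ 0)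
    (hb : b ≤ 0 ↔ 0 ≤ b') (hb' : 0 ≤ b ↔ b' ≤ 0) :
    max a b = 0 ↔ min a' b' = 0 := by
  rw [le_antisymm_iff, le_antisymm_iff (a := min a' b'), max_le_iff, le_max_iff, le_min_iff,
    min_le_iff, ha, ha', hb, hb']
  exact and_comm

lemma hasFDerivAt_exp_neg_div {E : Type*} [NormedAddCommGroup E] [NormedSpace ℝ E]
    {f : E → ℝ} {x : E} (c : ℝ) (hf : DifferentiableAt ℝ f x) :
    HasFDerivAt (fun y => Real.exp (-(f y) / c))
      (Real.exp (-(f x) / c) • (-c⁻¹) • fderiv ℝ f x) x := by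
  have h : HasFDerivAt (fun y => -(f y) / c) ((-c⁻¹) • fderiv ℝ f x) x := by
    refine (hf.hasFDerivAt.const_mul (-c⁻¹)).congr_of_eventuallyEq (.of_forall fun y => ?_)
    simp only
    ring
  exact h.exp

/-- Second directional derivative of `exp (-f / c)` in the direction `v`. -/
lemma fderiv_fderiv_exp_neg_div {E : Type*} [NormedAddCommGroup E] [NormedSpace ℝ E]
    {f : E → ℝ} {x : E} (c : ℝ) (hf : ContDiffAt ℝ 2 f x) (v : E) :
    fderiv ℝ (fun y => fderiv ℝ (fun z => Real.exp (-(f z) / c)) y v) x v =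
      Real.exp (-(f x) / c) * (c⁻¹ ^ 2 * (fderiv ℝ f x v) ^ 2
        - c⁻¹ * fderiv ℝ (fun y => fderiv ℝ f y v) x v) := by
  have hev : (fun y => fderiv ℝ (fun z => Real.exp (-(f z) / c)) y v) =ᶠ[nhds x]
      fun y => Real.exp (-(f y) / c) * (-c⁻¹ * fderiv ℝ f y v) := by
    filter_upwards [hf.eventually (by simp)] with y hy
    rw [(hasFDerivAt_exp_neg_div c (hy.differentiableAt (by simp))).fderiv]
    simp
  have hd : DifferentiableAt ℝ (fun y => fderiv ℝ f y v) x :=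
    ((hf.fderiv_right (m := 1) (by norm_num)).differentiableAt (by simp)).clm_apply
      (differentiableAt_const v)
  rw [hev.fderiv_eq, fderiv_fun_mul
      (hasFDerivAt_exp_neg_div c (hf.differentiableAt (by simp))).differentiableAt
      (hd.const_mul _),
    (hasFDerivAt_exp_neg_div c (hf.differentiableAt (by simp))).fderiv,
    (hd.hasFDerivAt.const_mul (-c⁻¹)).fderiv]
  simp
  ring

lemma sum_fderiv_single_sq {n : ℕ} (f : EuclideanSpace ℝ (Fin n) → ℝ)
    (x : EuclideanSpace ℝ (Fin n)) :
    ∑ i, (fderiv ℝ f x (EuclideanSpace.single i 1)) ^ 2 = ‖gradient f x‖ ^ 2 := by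
  rw [EuclideanSpace.real_norm_sq_eq]
  refine Finset.sum_congr rfl fun i _ => ?_
  have h : inner ℝ (gradient f x) (EuclideanSpace.single i (1 : ℝ)) =
      fderiv ℝ f x (EuclideanSpace.single i 1) := by
    simp [gradient, InnerProductSpace.toDual_symm_apply]
  rw [← h, EuclideanSpace.inner_single_right]
  simp

/-- under the Hopf–Cole transform `η = exp(−U/ℏ)`, the forward obstacle HJB
equation `max{−∂_tU + (1/2)|∇_xU|² − (ℏ/2)Δ_xU − V, U − S} = 0` holds at a point of `D`
iff the transformed obstacle problem
`min{−ℏ∂_tη − (ℏ²/2)Δ_xη + Vη, η − e^{−S/ℏ}} = 0` holds there. -/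
theorem hopf_cole_obstacle_forward {n : ℕ} (hn : 1 ≤ n) (hbar : ℝ) (hhbar : 0 < hbar)
    (V S : EuclideanSpace ℝ (Fin n) → ℝ)
    (D : Set (ℝ × EuclideanSpace ℝ (Fin n))) (hD : IsOpen D)
    (U : ℝ × EuclideanSpace ℝ (Fin n) → ℝ) (hU : ContDiffOn ℝ 2 U D)
    (η : ℝ × EuclideanSpace ℝ (Fin n) → ℝ)
    (hη : ∀ p, η p = Real.exp (-(U p) / hbar)) :
    ∀ p ∈ D,
      (max (-pT U p + (1 / 2) * ‖gX U p‖ ^ 2 - (hbar / 2) * lapX U p - V p.2)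
          (U p - S p.2) = 0
        ↔
       min (-hbar * pT η p - (hbar ^ 2 / 2) * lapX η p + V p.2 * η p)
          (η p - Real.exp (-(S p.2) / hbar)) = 0) := by
  intro p hp
  obtain rfl : η = fun q => Real.exp (-(U q) / hbar) := funext hη
  have hUp : ContDiffAt ℝ 2 U p := hU.contDiffAt (hD.mem_nhds hp)
  have hx : ContDiffAt ℝ 2 (fun y => U (p.1, y)) p.2 :=
    ContDiffAt.comp (g := U) p.2 hUp (contDiffAt_const.prodMk contDiffAt_id)
  have ht : DifferentiableAt ℝ (fun s => U (s, p.2)) p.1 :=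
    (ContDiffAt.comp (g := U) p.1 hUp
      (contDiffAt_id.prodMk contDiffAt_const)).differentiableAt (by simp)
  have hpT : pT (fun q => Real.exp (-(U q) / hbar)) p =
      Real.exp (-(U p) / hbar) * (-hbar⁻¹ * pT U p) := by
    unfold pT
    rw [(hasFDerivAt_exp_neg_div hbar ht).hasDerivAt.deriv]
    simp
  have hlap : lapX (fun q => Real.exp (-(U q) / hbar)) p =
      Real.exp (-(U p) / hbar) * (hbar⁻¹ ^ 2 * ‖gX U p‖ ^ 2 - hbar⁻¹ * lapX U p) := by
    unfold lapX gX
    rw [← sum_fderiv_single_sq, Finset.mul_sum, Finset.mul_sum, ← Finset.sum_sub_distrib,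
      Finset.mul_sum]
    exact Finset.sum_congr rfl fun i _ => fderiv_fderiv_exp_neg_div hbar hx _
  set e := Real.exp (-(U p) / hbar) with he
  have hepos : 0 < e := Real.exp_pos _
  have key : -hbar * pT (fun q => Real.exp (-(U q) / hbar)) p
      - (hbar ^ 2 / 2) * lapX (fun q => Real.exp (-(U q) / hbar)) p + V p.2 * e =
      e * -(-pT U p + (1 / 2) * ‖gX U p‖ ^ 2 - (hbar / 2) * lapX U p - V p.2) := by
    rw [hpT, hlap]
    field_simp
    ring
  simp only [← he]
  rw [key]
  apply max_eq_zero_iff_min_eq_zero_of_sign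
  · rw [mul_nonneg_iff_of_pos_left hepos, neg_nonneg]
  · rw [mul_nonpos_iff_pos_imp_nonpos, neg_nonpos]
    exact ⟨fun h => ⟨fun _ => h, fun _ => hepos.le⟩, fun h => h.1 hepos⟩
  · rw [sub_nonneg, he, Real.exp_le_exp, div_le_div_iff_of_pos_right hhbar, neg_le_neg_iff,
      sub_nonpos]
  · rw [sub_nonpos, he, Real.exp_le_exp, div_le_div_iff_of_pos_right hhbar, neg_le_neg_iff,
      sub_nonneg]
end

section
/- Let n ≥ 1, ℏ > 0, let V : ℝⁿ → ℝ be C¹, let D ⊆ ℝ × ℝⁿ be open, and let η : D → (0,∞) be C³ (all partial derivatives up to order 3, including mixed time–space derivatives, exist and are continuous) and satisfy ℏ ∂_t η = −(ℏ²/2) Δ_x η + V(x) η on D. Define the drift b := ℏ ∇_x log η : D → ℝⁿ. Then b satisfies the vector Burgers-type equation ∂_t b + (b · ∇_x) b + (ℏ/2) Δ_x b − ∇V(x) = 0 on D, where (b · ∇_x) b denotes the vector field with i-th component Σ_j b_j ∂_{x_j} b_i. -/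
/-- Time partial derivative of a vector field `b : ℝ × ℝⁿ → ℝⁿ` at `p = (t,x)`. -/
noncomputable def pTv {n : ℕ} (b : ℝ × EuclideanSpace ℝ (Fin n) → EuclideanSpace ℝ (Fin n))
    (p : ℝ × EuclideanSpace ℝ (Fin n)) : EuclideanSpace ℝ (Fin n) :=
  deriv (fun s => b (s, p.2)) p.1

/-- Componentwise spatial Laplacian of a vector field `b : ℝ × ℝⁿ → ℝⁿ` at `p = (t,x)`. -/
noncomputable def lapXv {n : ℕ} (b : ℝ × EuclideanSpace ℝ (Fin n) → EuclideanSpace ℝ (Fin n))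
    (p : ℝ × EuclideanSpace ℝ (Fin n)) : EuclideanSpace ℝ (Fin n) :=
  ∑ i, fderiv ℝ (fun y => fderiv ℝ (fun y' => b (p.1, y')) y (EuclideanSpace.single i 1))
    p.2 (EuclideanSpace.single i 1)

/-- Convective term `(b · ∇_x) b` at `p = (t,x)`: the spatial derivative of `b`
in the direction `b p`; its `i`-th component is `Σ_j b_j ∂_{x_j} b_i`. -/
noncomputable def convv {n : ℕ} (b : ℝ × EuclideanSpace ℝ (Fin n) → EuclideanSpace ℝ (Fin n))
    (p : ℝ × EuclideanSpace ℝ (Fin n)) : EuclideanSpace ℝ (Fin n) :=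
  fderiv ℝ (fun y => b (p.1, y)) p.2 (b p)

/-- The directional derivative of `f` at `p` in the direction `w`. -/
noncomputable def dirD {E F : Type*} [NormedAddCommGroup E] [NormedSpace ℝ E]
    [NormedAddCommGroup F] [NormedSpace ℝ F] (w : E) (f : E → F) (p : E) : F :=
  fderiv ℝ f p w

section DirectionalDerivatives

variable {E F : Type*} [NormedAddCommGroup E] [NormedSpace ℝ E]
  [NormedAddCommGroup F] [NormedSpace ℝ F] {D : Set E}

theorem dirD_congr (hD : IsOpen D) {f g : E → F} (h : ∀ q ∈ D, f q = g q) (w : E)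
    {p : E} (hp : p ∈ D) : dirD w f p = dirD w g p := by
  have h' : f =ᶠ[nhds p] g := Filter.eventuallyEq_of_mem (hD.mem_nhds hp) h
  simp only [dirD, h'.fderiv_eq]

theorem contDiffOn_dirD (hD : IsOpen D) {f : E → F} {m k : WithTop ℕ∞}
    (hf : ContDiffOn ℝ k f D) (hmk : m + 1 ≤ k) (w : E) : ContDiffOn ℝ m (dirD w f) D :=
  (hf.fderiv_of_isOpen hD hmk).clm_apply contDiffOn_const

theorem differentiableAt_of_contDiffOn (hD : IsOpen D) {f : E → F} {k : WithTop ℕ∞}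
    (hf : ContDiffOn ℝ k f D) (hk : 1 ≤ k) {p : E} (hp : p ∈ D) : DifferentiableAt ℝ f p :=
  (hf.differentiableOn (by rintro rfl; simp at hk)).differentiableAt (hD.mem_nhds hp)

theorem dirD_comm (hD : IsOpen D) {f : E → F} {k : WithTop ℕ∞}
    (hf : ContDiffOn ℝ k f D) (hk : 2 ≤ k) (v w : E) {p : E} (hp : p ∈ D) :
    dirD v (dirD w f) p = dirD w (dirD v f) p := by
  have hsymm : IsSymmSndFDerivAt ℝ f p :=
    (hf.contDiffAt (hD.mem_nhds hp)).isSymmSndFDerivAt (by simpa using hk)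
  have hd : DifferentiableAt ℝ (fderiv ℝ f) p :=
    differentiableAt_of_contDiffOn hD
      (hf.fderiv_of_isOpen (m := 1) hD (by rw [one_add_one_eq_two]; exact hk)) le_rfl hp
  have key : ∀ v w : E, dirD v (dirD w f) p = fderiv ℝ (fderiv ℝ f) p v w := by
    intro v w
    have := hd.hasFDerivAt.clm_apply (hasFDerivAt_const w p)
    unfold dirD
    rw [this.fderiv]
    simp
  rw [key, key]
  exact hsymm v w

theorem dirD_mul {f g : E → ℝ} {p : E} (hf : DifferentiableAt ℝ f p)
    (hg : DifferentiableAt ℝ g p) (w : E) :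
    dirD w (fun q => f q * g q) p = f p * dirD w g p + g p * dirD w f p := by
  simp [dirD, fderiv_fun_mul hf hg]

theorem dirD_const_mul {f : E → ℝ} {p : E} (hf : DifferentiableAt ℝ f p) (c : ℝ) (w : E) :
    dirD w (fun q => c * f q) p = c * dirD w f p := by
  simp [dirD, fderiv_const_mul hf c]

theorem dirD_add {f g : E → ℝ} {p : E} (hf : DifferentiableAt ℝ f p)
    (hg : DifferentiableAt ℝ g p) (w : E) :
    dirD w (fun q => f q + g q) p = dirD w f p + dirD w g p := by
  simp [dirD, fderiv_fun_add hf hg]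

theorem dirD_sum {ι : Type*} [Fintype ι] {f : ι → E → ℝ} {p : E}
    (hf : ∀ j, DifferentiableAt ℝ (f j) p) (w : E) :
    dirD w (fun q => ∑ j, f j q) p = ∑ j, dirD w (f j) p := by
  simp [dirD, fderiv_fun_sum (fun j _ => hf j)]

theorem dirD_coord {n : ℕ} {f : E → EuclideanSpace ℝ (Fin n)} {p : E}
    (hf : DifferentiableAt ℝ f p) (w : E) (i : Fin n) :
    (dirD w f p) i = dirD w (fun q => f q i) p := by
  have h' : HasFDerivAt (fun q => f q i)
      ((EuclideanSpace.proj i : EuclideanSpace ℝ (Fin n) →L[ℝ] ℝ).comp (fderiv ℝ f p)) p :=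
    (EuclideanSpace.proj i : EuclideanSpace ℝ (Fin n) →L[ℝ] ℝ).hasFDerivAt.comp p hf.hasFDerivAt
  simp [dirD, h'.fderiv]

end DirectionalDerivatives

section Slices

variable {X F : Type*} [NormedAddCommGroup X] [NormedSpace ℝ X]
  [NormedAddCommGroup F] [NormedSpace ℝ F] {D : Set (ℝ × X)}

theorem deriv_slice {f : ℝ × X → F} {p : ℝ × X} (hf : DifferentiableAt ℝ f p) :
    deriv (fun s => f (s, p.2)) p.1 = dirD (1, 0) f p := by
  have h1 : HasDerivAt (fun s : ℝ => (s, p.2)) ((1 : ℝ), (0 : X)) p.1 :=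
    (hasDerivAt_id p.1).prodMk (hasDerivAt_const p.1 p.2)
  exact (HasFDerivAt.comp_hasDerivAt (f := fun s : ℝ => (s, p.2)) (l := f)
    p.1 hf.hasFDerivAt h1).deriv

theorem fderiv_slice {f : ℝ × X → F} {t : ℝ} {x : X} (hf : DifferentiableAt ℝ f (t, x)) (v : X) :
    fderiv ℝ (fun y => f (t, y)) x v = dirD (0, v) f (t, x) := by
  have h1 : HasFDerivAt (fun y : X => (t, y)) (ContinuousLinearMap.inr ℝ ℝ X) x :=
    hasFDerivAt_prodMk_right t x
  have h2 : HasFDerivAt (fun y => f (t, y))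
      ((fderiv ℝ f (t, x)).comp (ContinuousLinearMap.inr ℝ ℝ X)) x :=
    HasFDerivAt.comp (g := f) x hf.hasFDerivAt h1
  rw [h2.fderiv]
  simp [dirD]

theorem fderiv_fderiv_slice (hD : IsOpen D) {f : ℝ × X → F} (hf : ContDiffOn ℝ 2 f D)
    {p : ℝ × X} (hp : p ∈ D) (v : X) :
    fderiv ℝ (fun y => fderiv ℝ (fun y' => f (p.1, y')) y v) p.2 v
      = dirD (0, v) (dirD (0, v) f) p := by
  have hev : (fun y => fderiv ℝ (fun y' => f (p.1, y')) y v)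
      =ᶠ[nhds p.2] fun y => dirD (0, v) f (p.1, y) := by
    have hc : Continuous fun y : X => (p.1, y) := by fun_prop
    filter_upwards [(hD.preimage hc).mem_nhds hp] with y hy
    exact fderiv_slice (differentiableAt_of_contDiffOn hD hf (by norm_num) hy) v
  rw [hev.fderiv_eq]
  exact fderiv_slice (differentiableAt_of_contDiffOn hD
    (contDiffOn_dirD (m := 1) hD hf (by norm_num) (0, v)) le_rfl hp) v

end Slices

/-- The `i`-th spatial coordinate direction in `ℝ × ℝⁿ`. -/
noncomputable def xdir {n : ℕ} (i : Fin n) : ℝ × EuclideanSpace ℝ (Fin n) :=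
  (0, EuclideanSpace.single i 1)

theorem gradient_coord {n : ℕ} (f : EuclideanSpace ℝ (Fin n) → ℝ)
    (x : EuclideanSpace ℝ (Fin n)) (i : Fin n) :
    gradient f x i = fderiv ℝ f x (EuclideanSpace.single i 1) := by
  have h : inner ℝ (gradient f x) (EuclideanSpace.single i (1 : ℝ))
      = fderiv ℝ f x (EuclideanSpace.single i 1) := by
    simp [gradient]
  rw [← h, EuclideanSpace.inner_single_right]
  simp

/-- The Hamilton–Jacobi–Bellman equation satisfied by `L = log η`. -/
theorem log_heat_equation {n : ℕ} {hbar : ℝ}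
    {V : EuclideanSpace ℝ (Fin n) → ℝ}
    {D : Set (ℝ × EuclideanSpace ℝ (Fin n))} (hD : IsOpen D)
    {η : ℝ × EuclideanSpace ℝ (Fin n) → ℝ} (hη : ContDiffOn ℝ 3 η D)
    (hηpos : ∀ p ∈ D, 0 < η p)
    (hheat : ∀ p ∈ D, hbar * pT η p = -(hbar ^ 2 / 2) * lapX η p + V p.2 * η p)
    {L : ℝ × EuclideanSpace ℝ (Fin n) → ℝ} (hL : L = fun q => Real.log (η q))
    (hLs : ContDiffOn ℝ 3 L D) :
    ∀ p ∈ D, hbar * dirD (1, 0) L p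
      = -(hbar ^ 2 / 2) * (∑ j, (dirD (xdir j) L p * dirD (xdir j) L p
          + dirD (xdir j) (dirD (xdir j) L) p)) + V p.2 := by
  intro p hp
  have hηd : ∀ q ∈ D, DifferentiableAt ℝ η q := fun q hq =>
    differentiableAt_of_contDiffOn hD hη (by norm_num) hq
  have hfirst : ∀ w, ∀ q ∈ D, dirD w η q = η q * dirD w L q := by
    intro w q hq
    have hne := (hηpos q hq).ne'
    have := ((hηd q hq).hasFDerivAt.log hne).fderiv
    simp only [dirD, hL, this]
    simp [hne]
  have hsecond : ∀ w, dirD w (dirD w η) p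
      = η p * (dirD w L p * dirD w L p + dirD w (dirD w L) p) := by
    intro w
    rw [dirD_congr hD (hfirst w) w hp, dirD_mul (hηd p hp) (differentiableAt_of_contDiffOn hD
      (contDiffOn_dirD (m := 2) hD hLs (by norm_num) w) (by norm_num) hp), hfirst w p hp]
    ring
  have hlap : lapX η p = η p * ∑ j, (dirD (xdir j) L p * dirD (xdir j) L p
      + dirD (xdir j) (dirD (xdir j) L) p) := by
    rw [lapX, Finset.mul_sum]
    refine Finset.sum_congr rfl fun j _ => ?_
    rw [fderiv_fderiv_slice hD (hη.of_le (by norm_num)) hp]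
    exact hsecond (xdir j)
  have hT : pT η p = η p * dirD (1, 0) L p := by
    rw [pT, deriv_slice (hηd p hp), hfirst _ p hp]
  have h := hheat p hp
  rw [hlap, hT] at h
  apply mul_left_cancel₀ (hηpos p hp).ne'
  linear_combination h

/-- if `η > 0` is a `C³` solution of `ℏ∂_tη = −(ℏ²/2)Δ_xη + Vη` on the open set
`D`, then the forward drift `b = ℏ∇_x log η` satisfies the Burgers-type equation
`∂_t b + (b·∇_x)b + (ℏ/2)Δ_x b − ∇V = 0` on `D`. -/
theorem forward_drift_equation {n : ℕ} (hn : 1 ≤ n) (hbar : ℝ) (hhbar : 0 < hbar)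
    (V : EuclideanSpace ℝ (Fin n) → ℝ) (hV : ContDiff ℝ 1 V)
    (D : Set (ℝ × EuclideanSpace ℝ (Fin n))) (hD : IsOpen D)
    (η : ℝ × EuclideanSpace ℝ (Fin n) → ℝ) (hηsmooth : ContDiffOn ℝ 3 η D)
    (hηpos : ∀ p ∈ D, 0 < η p)
    (hheat : ∀ p ∈ D, hbar * pT η p = -(hbar ^ 2 / 2) * lapX η p + V p.2 * η p)
    (b : ℝ × EuclideanSpace ℝ (Fin n) → EuclideanSpace ℝ (Fin n))
    (hb : ∀ p, b p = hbar • gX (fun q => Real.log (η q)) p) :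
    ∀ p ∈ D,
      pTv b p + convv b p + (hbar / 2) • lapXv b p - gradient V p.2 = 0 := by
  intro p hp
  obtain ⟨L, hL⟩ : ∃ L, L = fun q => Real.log (η q) := ⟨_, rfl⟩
  have hLs : ContDiffOn ℝ 3 L D := by
    rw [hL]
    exact hηsmooth.log fun q hq => (hηpos q hq).ne'
  have hHJ := log_heat_equation hD hηsmooth hηpos hheat hL hLs
  have hLd : ∀ q ∈ D, DifferentiableAt ℝ L q := fun q hq =>
    differentiableAt_of_contDiffOn hD hLs (by norm_num) hq
  have hL1 : ∀ w, ContDiffOn ℝ 2 (dirD w L) D := fun w =>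
    contDiffOn_dirD hD hLs (by norm_num) w
  have hL2 : ∀ v w, ContDiffOn ℝ 1 (dirD v (dirD w L)) D := fun v w =>
    contDiffOn_dirD hD (hL1 w) (by norm_num) v
  have hL1d : ∀ w, ∀ q ∈ D, DifferentiableAt ℝ (dirD w L) q := fun w q hq =>
    differentiableAt_of_contDiffOn hD (hL1 w) (by norm_num) hq
  have hL2d : ∀ v w, ∀ q ∈ D, DifferentiableAt ℝ (dirD v (dirD w L)) q := fun v w q hq =>
    differentiableAt_of_contDiffOn hD (hL2 v w) le_rfl hq
  have hbi : ∀ i, ∀ q ∈ D, b q i = hbar * dirD (xdir i) L q := by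
    intro i q hq
    rw [hb q, ← hL, gX]
    simp only [PiLp.smul_apply, smul_eq_mul, gradient_coord]
    rw [fderiv_slice (hLd q hq)]
    rfl
  have hbs : ContDiffOn ℝ 2 b D := by
    rw [contDiffOn_euclidean]
    intro i
    exact (contDiffOn_const.mul (hL1 (xdir i))).congr (hbi i)
  have hbd : ∀ q ∈ D, DifferentiableAt ℝ b q := fun q hq =>
    differentiableAt_of_contDiffOn hD hbs (by norm_num) hq
  have hb1 : ∀ w i, ∀ q ∈ D, (dirD w b q) i = hbar * dirD w (dirD (xdir i) L) q := by
    intro w i q hq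
    rw [dirD_coord (hbd q hq), dirD_congr hD (hbi i) w hq, dirD_const_mul (hL1d _ q hq)]
  have hb2 : ∀ w i, (dirD w (dirD w b) p) i
      = hbar * dirD w (dirD w (dirD (xdir i) L)) p := by
    intro w i
    rw [dirD_coord (differentiableAt_of_contDiffOn hD
      (contDiffOn_dirD (m := 1) hD hbs (by norm_num) w) le_rfl hp),
      dirD_congr hD (hb1 w i) w hp, dirD_const_mul (hL2d _ _ p hp)]
  ext i
  have hTi : pTv b p i = hbar * dirD (1, 0) (dirD (xdir i) L) p := by
    rw [pTv, deriv_slice (hbd p hp), hb1 _ _ p hp]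
  have hlapi : lapXv b p i
      = hbar * ∑ j, dirD (xdir j) (dirD (xdir j) (dirD (xdir i) L)) p := by
    have : lapXv b p = ∑ j, dirD (xdir j) (dirD (xdir j) b) p :=
      Finset.sum_congr rfl fun j _ => fderiv_fderiv_slice hD hbs hp _
    rw [this, Finset.mul_sum]
    simp only [WithLp.ofLp_sum, Finset.sum_apply, hb2]
  have hconvi : convv b p i
      = hbar ^ 2 * ∑ j, dirD (xdir j) L p * dirD (xdir j) (dirD (xdir i) L) p := by
    have hexp : b p = ∑ j, b p j • EuclideanSpace.single j (1 : ℝ) := by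
      have := (EuclideanSpace.basisFun (Fin n) ℝ).sum_repr (b p)
      simpa using this.symm
    have : convv b p = ∑ j, b p j • dirD (xdir j) b p := by
      rw [convv]
      conv_lhs => rw [hexp]
      rw [map_sum]
      refine Finset.sum_congr rfl fun j _ => ?_
      rw [map_smul, fderiv_slice (hbd p hp)]
      rfl
    rw [this, Finset.mul_sum]
    simp only [WithLp.ofLp_sum, Finset.sum_apply, PiLp.smul_apply, smul_eq_mul, hb1 _ _ p hp,
      hbi _ p hp]
    exact Finset.sum_congr rfl fun j _ => by ring
  have hVd : Differentiable ℝ V := hV.differentiable (by norm_num)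
  have hVsnd : DifferentiableAt ℝ (fun q : ℝ × EuclideanSpace ℝ (Fin n) => V q.2) p := by
    fun_prop
  have hVi : gradient V p.2 i = dirD (xdir i) (fun q => V q.2) p := by
    rw [gradient_coord]
    exact fderiv_slice (f := fun q : ℝ × EuclideanSpace ℝ (Fin n) => V q.2) hVsnd _
  -- The `x_i`-derivative of the Hamilton–Jacobi–Bellman equation.
  have hdiff := dirD_congr hD hHJ (xdir i) hp
  have hsummand : ∀ j, DifferentiableAt ℝ (fun q => dirD (xdir j) L q * dirD (xdir j) L q
      + dirD (xdir j) (dirD (xdir j) L) q) p := fun j =>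
    ((hL1d _ p hp).mul (hL1d _ p hp)).add (hL2d _ _ p hp)
  have hsum : DifferentiableAt ℝ (fun q => ∑ j, (dirD (xdir j) L q * dirD (xdir j) L q
      + dirD (xdir j) (dirD (xdir j) L) q)) p :=
    DifferentiableAt.fun_sum fun j _ => hsummand j
  rw [dirD_const_mul (hL1d _ p hp), dirD_add (hsum.const_mul _) hVsnd, dirD_const_mul hsum,
    dirD_sum hsummand] at hdiff
  have hterm : ∀ j, dirD (xdir i) (fun q => dirD (xdir j) L q * dirD (xdir j) L q
      + dirD (xdir j) (dirD (xdir j) L) q) p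
      = 2 * (dirD (xdir j) L p * dirD (xdir j) (dirD (xdir i) L) p)
        + dirD (xdir j) (dirD (xdir j) (dirD (xdir i) L)) p := by
    intro j
    have hcomm : ∀ q ∈ D, dirD (xdir i) (dirD (xdir j) L) q = dirD (xdir j) (dirD (xdir i) L) q :=
      fun q hq => dirD_comm hD hLs (by norm_num) _ _ hq
    rw [dirD_add ((hL1d _ p hp).fun_mul (hL1d _ p hp)) (hL2d _ _ p hp),
      dirD_mul (hL1d _ p hp) (hL1d _ p hp), dirD_comm hD (hL1 _) le_rfl (xdir i) (xdir j) hp,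
      dirD_congr hD hcomm (xdir j) hp, hcomm p hp]
    ring
  simp only [hterm, Finset.sum_add_distrib, ← Finset.mul_sum] at hdiff
  rw [dirD_comm hD hLs (by norm_num) (xdir i) (1, 0) hp] at hdiff
  simp only [PiLp.sub_apply, PiLp.add_apply, PiLp.smul_apply, smul_eq_mul, PiLp.zero_apply,
    hTi, hlapi, hconvi, hVi]
  linear_combination hdiff
end

section
/- Let n ≥ 1 and let h : ℝ × ℝⁿ × ℝ × ℝⁿ → (0, ∞) be Borel measurable and satisfy the Chapman–Kolmogorov property: for all real a < b < c and all x, z ∈ ℝⁿ, ∫_{ℝⁿ} h(a,x,b,y) h(b,y,c,z) dy = h(a,x,c,z) < ∞. For s < t < u and x, z ∈ ℝⁿ define Q(s,x,t,B,u,z) := (1/h(s,x,u,z)) ∫_B h(s,x,t,y) h(t,y,u,z) dy for Borel B ⊆ ℝⁿ. Then: (a) for all s < t < u and x, z ∈ ℝⁿ, B ↦ Q(s,x,t,B,u,z) is a Borel probability measure on ℝⁿ; and (b) for all s < t < u < r, all x, z ∈ ℝⁿ, and all Borel sets B₁, B₂ ⊆ ℝⁿ, the Bernstein consistency identity holds: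 ∫_{B₂} Q(s,x,t,B₁,u,w) Q(s,x,u,dw,r,z) = ∫_{B₁} Q(s,x,t,dy,r,z) Q(t,y,u,B₂,r,z). -/
/-!
Part (a) is the Chapman–Kolmogorov identity divided by `h s x u z`.

For (b), both sides are iterated integrals over `B₁ × B₂` of the same joint density: by
`bernstein_density_mul`, the normalizing factor `h s x u w` (resp. `h t y r z`) cancels and
`h s x t y * h t y u w * h u w r z / h s x r z` remains in both cases. Tonelli's theorem for
`ℝ≥0∞`-valued integrals then gives the identity; it transfers to the Bochner integrals because
the integrands are measurable and, by (a), finite.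
-/

open MeasureTheory

/-- The Bernstein transition probability built from a positive kernel `h`:
`Q(s,x,t,B,u,z) = (1/h(s,x,u,z)) ∫_B h(s,x,t,y) h(t,y,u,z) dy`, realized as the measure
with density `y ↦ h(s,x,t,y) h(t,y,u,z) / h(s,x,u,z)` with respect to Lebesgue measure. -/
noncomputable def bernsteinQ {n : ℕ} (h : ℝ → EuclideanSpace ℝ (Fin n) → ℝ → EuclideanSpace ℝ (Fin n) → ℝ)
    (s : ℝ) (x : EuclideanSpace ℝ (Fin n)) (t u : ℝ) (z : EuclideanSpace ℝ (Fin n)) :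
    Measure (EuclideanSpace ℝ (Fin n)) :=
  volume.withDensity (fun y => ENNReal.ofReal (h s x t y * h t y u z / h s x u z))

/-- The two factorizations of the joint density of the positions `(y, w)` at times `(t, u)`. -/
lemma bernstein_density_mul {E : Type*} (h : ℝ → E → ℝ → E → ℝ)
    (hpos : ∀ a x b y, 0 < h a x b y) (s t u r : ℝ) (x y w z : E) :
    ENNReal.ofReal (h s x u w * h u w r z / h s x r z) *
        ENNReal.ofReal (h s x t y * h t y u w / h s x u w) =
      ENNReal.ofReal (h s x t y * h t y r z / h s x r z) *
        ENNReal.ofReal (h t y u w * h u w r z / h t y r z) := by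
  have h1 := hpos s x u w
  have h2 := hpos u w r z
  have h3 := hpos s x r z
  have h4 := hpos s x t y
  have h5 := hpos t y u w
  have h6 := hpos t y r z
  rw [← ENNReal.ofReal_mul (by positivity), ← ENNReal.ofReal_mul (by positivity)]
  congr 1
  field_simp

/-- if the strictly positive measurable kernel `h` satisfies the
Chapman–Kolmogorov property, then (a) `Q(s,x,t,·,u,z)` is a probability measure for
all `s < t < u`, and (b) the Bernstein consistency identity
`∫_{B₂} Q(s,x,t,B₁,u,w) Q(s,x,u,dw,r,z) = ∫_{B₁} Q(t,y,u,B₂,r,z) Q(s,x,t,dy,r,z)`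
holds for all `s < t < u < r` and all Borel sets `B₁, B₂`. -/
theorem bernstein_transition_probability {n : ℕ} (hn : 1 ≤ n)
    (h : ℝ → EuclideanSpace ℝ (Fin n) → ℝ → EuclideanSpace ℝ (Fin n) → ℝ)
    (hmeas : Measurable (fun q : ℝ × EuclideanSpace ℝ (Fin n) × ℝ × EuclideanSpace ℝ (Fin n) =>
      h q.1 q.2.1 q.2.2.1 q.2.2.2))
    (hpos : ∀ a x b y, 0 < h a x b y)
    (hint : ∀ (a b c : ℝ) (x z : EuclideanSpace ℝ (Fin n)), a < b → b < c →
      Integrable (fun y => h a x b y * h b y c z))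
    (hck : ∀ (a b c : ℝ) (x z : EuclideanSpace ℝ (Fin n)), a < b → b < c →
      (∫ y, h a x b y * h b y c z) = h a x c z) :
    (∀ (s t u : ℝ) (x z : EuclideanSpace ℝ (Fin n)), s < t → t < u →
      IsProbabilityMeasure (bernsteinQ h s x t u z)) ∧
    (∀ (s t u r : ℝ) (x z : EuclideanSpace ℝ (Fin n)), s < t → t < u → u < r →
      ∀ B₁ B₂ : Set (EuclideanSpace ℝ (Fin n)), MeasurableSet B₁ → MeasurableSet B₂ →
        (∫ w in B₂, (bernsteinQ h s x t u w B₁).toReal ∂(bernsteinQ h s x u r z))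
          = ∫ y in B₁, (bernsteinQ h t y u r z B₂).toReal ∂(bernsteinQ h s x t r z)) := by
  have hm : ∀ {α : Type} [MeasurableSpace α] (a b : ℝ) (f g : α → EuclideanSpace ℝ (Fin n)),
      Measurable f → Measurable g → Measurable (fun p => h a (f p) b (g p)) := by
    intro α _ a b f g hf hg
    exact hmeas.comp
      (measurable_const.prodMk (hf.prodMk (measurable_const.prodMk hg)))
  have hd : ∀ {α : Type} [MeasurableSpace α] (s t u : ℝ)
      (f g k : α → EuclideanSpace ℝ (Fin n)), Measurable f → Measurable g → Measurable k →
      Measurable (fun p => ENNReal.ofReal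
        (h s (f p) t (g p) * h t (g p) u (k p) / h s (f p) u (k p))) := by
    intro α _ s t u f g k hf hg hk
    exact (((hm s t f g hf hg).mul (hm t u g k hg hk)).div (hm s u f k hf hk)).ennreal_ofReal
  have hprob : ∀ (s t u : ℝ) (x z : EuclideanSpace ℝ (Fin n)), s < t → t < u →
      IsProbabilityMeasure (bernsteinQ h s x t u z) := by
    intro s t u x z hst htu
    refine ⟨?_⟩
    rw [bernsteinQ, withDensity_apply _ MeasurableSet.univ, Measure.restrict_univ,
      ← ofReal_integral_eq_lintegral_ofReal ((hint s t u x z hst htu).div_const _)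
        (Filter.Eventually.of_forall fun y =>
          (div_pos (mul_pos (hpos _ _ _ _) (hpos _ _ _ _)) (hpos _ _ _ _)).le),
      integral_div, hck s t u x z hst htu, div_self (hpos _ _ _ _).ne', ENNReal.ofReal_one]
  refine ⟨hprob, ?_⟩
  intro s t u r x z hst htu hur B₁ B₂ hB₁ hB₂
  have happ : ∀ (s t u : ℝ) (x z : EuclideanSpace ℝ (Fin n)) (B : Set (EuclideanSpace ℝ (Fin n))),
      MeasurableSet B → bernsteinQ h s x t u z B =
        ∫⁻ y in B, ENNReal.ofReal (h s x t y * h t y u z / h s x u z) := by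
    intro s t u x z B hB
    rw [bernsteinQ, withDensity_apply _ hB]
  have hmL : Measurable (fun w => bernsteinQ h s x t u w B₁) := by
    simp_rw [happ _ _ _ _ _ _ hB₁]
    exact (hd s t u (fun _ => x) Prod.snd Prod.fst measurable_const measurable_snd
      measurable_fst).lintegral_prod_right'
  have hmR : Measurable (fun y => bernsteinQ h t y u r z B₂) := by
    simp_rw [happ _ _ _ _ _ _ hB₂]
    exact (hd t u r Prod.fst Prod.snd (fun _ => z) measurable_fst measurable_snd
      measurable_const).lintegral_prod_right'
  rw [integral_toReal hmL.aemeasurable (Filter.Eventually.of_forall fun w => by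
      have := hprob s t u x w hst htu
      exact measure_lt_top _ _),
    integral_toReal hmR.aemeasurable (Filter.Eventually.of_forall fun y => by
      have := hprob t u r y z htu hur
      exact measure_lt_top _ _)]
  congr 1
  have hd1 : ∀ (s t u : ℝ) (x z : EuclideanSpace ℝ (Fin n)), Measurable (fun y =>
      ENNReal.ofReal (h s x t y * h t y u z / h s x u z)) := fun s t u x z =>
    hd s t u (fun _ => x) id (fun _ => z) measurable_const measurable_id measurable_const
  rw [bernsteinQ, bernsteinQ, restrict_withDensity hB₂, restrict_withDensity hB₁,
    lintegral_withDensity_eq_lintegral_mul _ (hd1 s u r x z) hmL,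
    lintegral_withDensity_eq_lintegral_mul _ (hd1 s t r x z) hmR]
  simp only [Pi.mul_apply]
  simp_rw [happ _ _ _ _ _ _ hB₁, happ _ _ _ _ _ _ hB₂]
  have hdw : ∀ w, Measurable (fun y =>
      ENNReal.ofReal (h s x t y * h t y u w / h s x u w)) := fun w => hd1 s t u x w
  have hdy : ∀ y, Measurable (fun w =>
      ENNReal.ofReal (h t y u w * h u w r z / h t y r z)) := fun y => hd1 t u r y z
  simp_rw [← lintegral_const_mul _ (hdw _), ← lintegral_const_mul _ (hdy _)]
  rw [lintegral_lintegral_swap]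
  · simp_rw [bernstein_density_mul h hpos s t u r x _ _ z]
  · exact (((hd1 s u r x z).comp measurable_fst).mul
      (hd s t u (fun _ => x) Prod.snd Prod.fst measurable_const measurable_snd
        measurable_fst)).aemeasurable
end

section
/- Let n ≥ 1, T > 0, let D ⊆ ℝ × ℝⁿ be an open set with D ⊆ [−T/2, T/2] × ℝⁿ in its time component (i.e., every (t,x) ∈ D has t ∈ [−T/2, T/2]), and let G : D × [−T/2, T/2] → ℝ be jointly continuous. For (t,x) ∈ D define τ(t,x) := inf{ s ∈ [t, T/2] : G(t,x,s) ≥ 0 }, with the convention inf ∅ := T/2. Assume that for every γ > 0 there exists ζ > 0 such that G(t,x,s) < −ζ for every (t,x) ∈ D and every s ∈ [t, τ(t,x) − γ]. Then the map (t,x) ↦ τ(t,x) is continuous on D. -/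
/-!
Write `p = (t, x)`. On `D` the infimum defining `τ p` is attained, since the set is closed; so
either `τ p = T / 2` or `G p (τ p) ≥ 0`, and `G p s < 0` for `t ≤ s < τ p`.

Lower semicontinuity needs only continuity of `G` and compactness of the time interval: if
`c < τ p`, then `G p < 0` on `[t, c]`, and by the tube lemma `G q < 0` on `[q.1, c]` for all `q`
near `p`, so `τ q > c`.

Upper semicontinuity uses the uniform gap. If `τ p < T / 2`, then `G p (τ p) ≥ 0`, so
`G q (max q.1 (τ p)) > -ζ` for `q` near `p`. If `τ q` exceeded `τ p` by `2γ`, the time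
`max q.1 (τ p)` would lie in `[q.1, τ q - γ]`, where `G q < -ζ`.
-/

open Set
open Filter Topology

/-- deterministic continuity of the first hitting time. Let `D` be an open
subset of `ℝ × ℝⁿ` whose time component lies in `[−T/2, T/2]`, let `G` be jointly
continuous on `D × [−T/2, T/2]`, and define
`τ(t,x) = inf{ s ∈ [t, T/2] : G(t,x,s) ≥ 0 }` with `inf ∅ = T/2` (encoded by adjoining
`T/2` to the set). If for every `γ > 0` there is `ζ > 0` with `G(t,x,s) < −ζ` for all
`(t,x) ∈ D` and `s ∈ [t, τ(t,x) − γ]`, then `τ` is continuous on `D`. -/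
theorem hitting_time_continuous {n : ℕ} (hn : 1 ≤ n) (T : ℝ) (hT : 0 < T)
    (D : Set (ℝ × EuclideanSpace ℝ (Fin n))) (hD : IsOpen D)
    (hDtime : ∀ p ∈ D, p.1 ∈ Icc (-(T / 2)) (T / 2))
    (G : ℝ × EuclideanSpace ℝ (Fin n) → ℝ → ℝ)
    (hG : ContinuousOn (fun q : (ℝ × EuclideanSpace ℝ (Fin n)) × ℝ => G q.1 q.2)
      (D ×ˢ Icc (-(T / 2)) (T / 2)))
    (τ : ℝ × EuclideanSpace ℝ (Fin n) → ℝ)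
    (hτ : ∀ p, τ p = sInf ({s | s ∈ Icc p.1 (T / 2) ∧ 0 ≤ G p s} ∪ {T / 2}))
    (hunif : ∀ γ > (0 : ℝ), ∃ ζ > (0 : ℝ), ∀ p ∈ D, ∀ s ∈ Icc p.1 (τ p - γ), G p s < -ζ) :
    ContinuousOn τ D := by
  have hbdd : ∀ p ∈ D, BddBelow ({s | s ∈ Icc p.1 (T / 2) ∧ 0 ≤ G p s} ∪ {T / 2}) := by
    intro p hp
    refine ⟨p.1, ?_⟩
    rintro s (hs | hs)
    · exact hs.1.1
    · rw [mem_singleton_iff.1 hs]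
      exact (hDtime p hp).2
  have hmem : ∀ p ∈ D, τ p ∈ {s | s ∈ Icc p.1 (T / 2) ∧ 0 ≤ G p s} ∪ {T / 2} := by
    intro p hp
    rw [hτ p]
    refine IsClosed.csInf_mem (IsClosed.union ?_ isClosed_singleton) ⟨T / 2, Or.inr rfl⟩
      (hbdd p hp)
    have hc : ContinuousOn (fun s => G p s) (Icc p.1 (T / 2)) :=
      hG.comp (f := fun s : ℝ => (p, s)) (by fun_prop)
        fun s hs => ⟨hp, (hDtime p hp).1.trans hs.1, hs.2⟩
    exact hc.preimage_isClosed_of_isClosed isClosed_Icc isClosed_Ici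
  have hle : ∀ p ∈ D, τ p ≤ T / 2 := by
    intro p hp
    rw [hτ p]
    exact csInf_le (hbdd p hp) (Or.inr rfl)
  have hge : ∀ p ∈ D, p.1 ≤ τ p := by
    intro p hp
    rcases hmem p hp with h | h
    · exact h.1.1
    · rw [mem_singleton_iff.1 h]
      exact (hDtime p hp).2
  have hneg : ∀ p ∈ D, ∀ s, p.1 ≤ s → s < τ p → G p s < 0 := by
    intro p hp s h1 h2
    by_contra! h
    have h3 : τ p ≤ s := by
      rw [hτ p]
      exact csInf_le (hbdd p hp) (Or.inl ⟨⟨h1, h2.le.trans (hle p hp)⟩, h⟩)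
    exact absurd h2 (not_lt.2 h3)
  intro p hp
  have hpD : ∀ᶠ q in 𝓝 p, q ∈ D := hD.mem_nhds hp
  refine ContinuousAt.continuousWithinAt (tendsto_order.2 ⟨fun c hc => ?_, fun c hc => ?_⟩)
  · have htube : ∀ᶠ q in 𝓝 p, ∀ s ∈ Icc (-(T / 2)) (T / 2),
        q ∈ D → s ∈ Icc (-(T / 2)) (T / 2) → q.1 ≤ s → s ≤ c → G q s < 0 := by
      refine isCompact_Icc.eventually_forall_of_forall_eventually fun s hs => ?_
      rcases lt_or_ge s p.1 with h1 | h1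
      · have : ∀ᶠ z : (ℝ × EuclideanSpace ℝ (Fin n)) × ℝ in 𝓝 (p, s), z.2 < z.1.1 :=
          (isOpen_lt (by fun_prop) (by fun_prop)).mem_nhds h1
        filter_upwards [this] with z hz _ _ h
        exact absurd hz (not_lt.2 h)
      rcases lt_or_ge c s with h2 | h2
      · have : ∀ᶠ z : (ℝ × EuclideanSpace ℝ (Fin n)) × ℝ in 𝓝 (p, s), c < z.2 :=
          (isOpen_lt (by fun_prop) (by fun_prop)).mem_nhds h2
        filter_upwards [this] with z hz _ _ _ h
        exact absurd hz (not_lt.2 h)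
      have h3 := (hG (p, s) ⟨hp, hs⟩).eventually_lt_const
        (hneg p hp s h1 (h2.trans_lt hc))
      rw [eventually_nhdsWithin_iff] at h3
      filter_upwards [h3] with z hz hzD hzI _ _
      exact hz ⟨hzD, hzI⟩
    filter_upwards [hpD, htube] with q hq hqs
    rcases hmem q hq with h | h
    · by_contra! hcq
      have hI : τ q ∈ Icc (-(T / 2)) (T / 2) := ⟨(hDtime q hq).1.trans h.1.1, h.1.2⟩
      exact absurd (hqs _ hI hq hI h.1.1 hcq) (not_lt.2 h.2)
    · rw [mem_singleton_iff.1 h]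
      exact hc.trans_le (hle p hp)
  · rcases hmem p hp with h | h
    · obtain ⟨ζ, hζ, hgap⟩ := hunif ((c - τ p) / 2) (by linarith)
      -- `τ p` itself may precede `q.1` when `τ p = p.1`, hence the maximum.
      have hcont : ContinuousWithinAt (fun q => G q (max q.1 (τ p))) D p := by
        have hmax : max p.1 (τ p) = τ p := max_eq_right (hge p hp)
        refine ContinuousWithinAt.comp (t := D ×ˢ Icc (-(T / 2)) (T / 2))
          (g := fun q : (ℝ × EuclideanSpace ℝ (Fin n)) × ℝ => G q.1 q.2)
          (f := fun q : ℝ × EuclideanSpace ℝ (Fin n) => (q, max q.1 (τ p))) ?_ ?_ ?_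
        · refine hG _ ⟨hp, ?_⟩
          simp only [hmax]
          exact ⟨(hDtime p hp).1.trans h.1.1, h.1.2⟩
        · exact Continuous.continuousWithinAt (by fun_prop)
        · exact fun q hq => ⟨hq, (hDtime q hq).1.trans (le_max_left _ _),
            max_le (hDtime q hq).2 h.1.2⟩
      have hval : -ζ < G p (max p.1 (τ p)) := by
        rw [max_eq_right (hge p hp)]
        linarith [h.2]
      have h1 := hcont.eventually_const_lt hval
      rw [eventually_nhdsWithin_iff] at h1
      have h2 : ∀ᶠ q : ℝ × EuclideanSpace ℝ (Fin n) in 𝓝 p, q.1 < τ p + (c - τ p) / 2 :=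
        (isOpen_lt (by fun_prop) (by fun_prop)).mem_nhds
          (show p.1 < τ p + (c - τ p) / 2 by linarith [hge p hp])
      filter_upwards [hpD, h1, h2] with q hq hq1 hq2
      by_contra! hcq
      have := hgap q hq (max q.1 (τ p))
        ⟨le_max_left _ _, max_le (by linarith) (by linarith)⟩
      linarith [hq1 hq]
    · filter_upwards [hpD] with q hq
      rw [mem_singleton_iff.1 h] at hc
      exact (hle q hq).trans_lt hc
end
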